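/- arXiv:1409.6951 — 2 statements merged into one kernel-verified Lean document; each statement's English description precedes it below -/
import Mathlib

section
/- For every μ > -1, the first positive zero j_{μ,1} of the Bessel function J_μ of the first kind satisfies the bounds √((μ+1)(μ+5)) ≤ j_{μ,1} ≤ √(μ+1)(√(μ+2)+1). -/
open Real

/-- Bessel function of the first kind of order `μ`,
`J_μ(z) = Σ_{k≥0} (-1)^k / (k! Γ(k+μ+1)) (z/2)^{2k+μ}`. -/
noncomputable def besselJ (μ z : ℝ) : ℝ :=
  ∑' k : ℕ, ((-1 : ℝ) ^ k / ((k.factorial : ℝ) * Real.Gamma ((k : ℝ) + μ + 1))) *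
    (z / 2) ^ (2 * (k : ℝ) + μ)

/-- `j` is the smallest positive zero of `f`. -/
def IsFirstPosZero (f : ℝ → ℝ) (j : ℝ) : Prop :=
  0 < j ∧ f j = 0 ∧ ∀ z, 0 < z → z < j → f z ≠ 0

/-!
For `z > 0` one has `J_μ(z) = (z/2)^μ y(z²/4)`, where `y` is entire with `y(0) ≠ 0` and
`t y'' + a y' + y = 0`, `a = μ + 1`. Let `T = j²/4` be the first positive zero of `y`.

*Lower bound.* The function `w(t) = (T - t) exp(-at/(2T))` solves `t w'' + a w' + q w = 0` with
`q(t) = a/T + a²/(2T) - a²t/(4T²)`. The weighted Wronskian `t^a (y w' - w y')` vanishes at `0` and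
at `T`, and its derivative is `t^(a-1) (1 - q) y w`, so Rolle's theorem gives `q(c) = 1` for some
`0 < c < T`. Hence `T > a (a + 4) / 4`.

*Upper bound.* Since `y` has no zero on `[0, R]` for `R < T`, completing the square (Jacobi) gives
`∫₀ᴿ t^(a-1) φ² ≤ ∫₀ᴿ t^a φ'²` for trial functions `φ` with `φ(R) = 0`. Taking
`φ(t) = t^β - R^β` and the optimal `β` yields `T ≤ a (√(a + 1) + 1)² / 4`.
-/

open Filter Topology Set

section HypergeometricZeroOne

open Complex (regularizedHGFun regularizedHGFunSeries)

theorem hasSum_regularizedHGFun_zero_singleton (b z : ℂ) :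
    HasSum (fun k : ℕ ↦ z ^ k / (k.factorial * Complex.Gamma (b + k)))
      (regularizedHGFun 0 {b} z) := by
  have hz : z ∈ Metric.eball 0 (regularizedHGFunSeries 0 {b}).radius := by
    rw [Complex.radius_regularizedHGFunSeries_eq_top (by simp)]
    simp
  refine (FormalMultilinearSeries.hasSum _ hz).congr_fun fun k ↦ ?_
  simp [regularizedHGFunSeries, Complex.regularizedHGFunCoeff, div_eq_mul_inv, mul_comm]

theorem hasDerivAt_regularizedHGFun_zero_singleton (b z : ℂ) :
    HasDerivAt (regularizedHGFun 0 {b}) (regularizedHGFun 0 {b + 1} z) z := by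
  set p := regularizedHGFunSeries 0 {b} with hp
  have hradius : p.radius = ⊤ := Complex.radius_regularizedHGFunSeries_eq_top (by simp)
  have hderiv : HasDerivAt (regularizedHGFun 0 {b}) (p.derivSeries.sum z 1) z :=
    (p.hasFDerivAt_sum (by simp [hradius])).hasDerivAt
  have hsum : HasSum (fun k : ℕ ↦ p.derivSeries k (fun _ ↦ z) 1) (p.derivSeries.sum z 1) := by
    have hz : z ∈ Metric.eball 0 p.derivSeries.radius := by
      simp [top_le_iff.1 (hradius ▸ p.radius_le_radius_derivSeries)]
    exact (p.derivSeries.hasSum hz).mapL (ContinuousLinearMap.apply ℂ ℂ 1)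
  refine hderiv.congr_deriv (hsum.unique ?_)
  refine (hasSum_regularizedHGFun_zero_singleton (b + 1) z).congr_fun fun k ↦ ?_
  have hk : (k : ℂ) + 1 ≠ 0 := k.cast_add_one_ne_zero
  simp only [hp, FormalMultilinearSeries.apply_eq_prod_smul_coeff, Finset.prod_const,
    Finset.card_univ, Fintype.card_fin, smul_apply, FormalMultilinearSeries.derivSeries_coeff_one,
    Complex.regularizedHGFunSeries_coeff, Complex.regularizedHGFunCoeff, Multiset.map_zero,
    Multiset.prod_zero, Nat.factorial_succ, Nat.cast_mul, Nat.cast_add, Nat.cast_one, ← add_assoc,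
    Multiset.map_singleton, Multiset.prod_singleton, one_div, mul_inv_rev, nsmul_eq_mul,
    smul_eq_mul, add_right_comm b 1]
  field_simp

theorem regularizedHGFun_zero_singleton_eq (b z : ℂ) :
    regularizedHGFun 0 {b} z =
      b * regularizedHGFun 0 {b + 1} z + z * regularizedHGFun 0 {b + 2} z := by
  have hshift : HasSum (fun k : ℕ ↦ k * (z ^ k / (k.factorial * Complex.Gamma (b + 1 + k))))
      (z * regularizedHGFun 0 {b + 2} z) := by
    rw [← hasSum_nat_add_iff' 1]
    simp only [Finset.range_one, Finset.sum_singleton, Nat.cast_zero, zero_mul, sub_zero]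
    refine ((hasSum_regularizedHGFun_zero_singleton (b + 2) z).mul_left z).congr_fun fun k ↦ ?_
    have hk : (k : ℂ) + 1 ≠ 0 := k.cast_add_one_ne_zero
    rw [Nat.factorial_succ, show b + 1 + (k + 1 : ℕ) = b + 2 + k by push_cast; ring]
    push_cast
    field_simp
    ring
  refine (hasSum_regularizedHGFun_zero_singleton b z).unique
    ((((hasSum_regularizedHGFun_zero_singleton (b + 1) z).mul_left b).add hshift).congr_fun
      fun k ↦ ?_)
  rw [← add_mul, div_mul_eq_div_div_swap, div_mul_eq_div_div_swap]
  simp only [div_eq_mul_inv]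
  rw [Complex.one_div_Gamma_eq_self_mul_one_div_Gamma_add_one (b + k), add_right_comm]
  ring

end HypergeometricZeroOne

/-- The entire function `∑ (-t)^k / (k! Γ(a + k))`, i.e. the regularized hypergeometric function
`₀F₁(; a; -t) / Γ(a)`. It is `J_{a-1}` in the variable `t = z²/4`, freed of its branch point at the
origin: `J_μ(z) = (z/2)^μ reducedBessel (μ + 1) (z²/4)`. -/
noncomputable def reducedBessel (a t : ℝ) : ℝ :=
  (Complex.regularizedHGFun 0 {(a : ℂ)} (-t)).re

theorem hasSum_reducedBessel (a t : ℝ) :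
    HasSum (fun k : ℕ ↦ (-t) ^ k / (k.factorial * Gamma (a + k))) (reducedBessel a t) := by
  refine (Complex.hasSum_re (hasSum_regularizedHGFun_zero_singleton a (-t))).congr_fun fun k ↦ ?_
  rw [← Complex.ofReal_re ((-t) ^ k / _)]
  push_cast [← Complex.Gamma_ofReal]
  rfl

theorem reducedBessel_zero (a : ℝ) : reducedBessel a 0 = (Gamma a)⁻¹ := by
  refine (hasSum_reducedBessel a 0).unique ?_
  convert hasSum_ite_eq 0 (Gamma a)⁻¹ using 2 with k
  rcases eq_or_ne k 0 with rfl | hk <;> simp [*]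

theorem hasDerivAt_reducedBessel (a t : ℝ) :
    HasDerivAt (reducedBessel a) (-reducedBessel (a + 1) t) t := by
  have h := ((hasDerivAt_regularizedHGFun_zero_singleton a (-t)).scomp (t : ℂ)
    (hasDerivAt_neg (t : ℂ))).real_of_complex
  unfold reducedBessel
  simpa [Function.comp_def] using h

theorem reducedBessel_eq (a t : ℝ) :
    reducedBessel a t = a * reducedBessel (a + 1) t - t * reducedBessel (a + 2) t := by
  have h := congrArg Complex.re (regularizedHGFun_zero_singleton_eq a (-t))
  simpa [reducedBessel, sub_eq_add_neg] using h

theorem besselJ_eq_rpow_mul_reducedBessel (μ : ℝ) {z : ℝ} (hz : 0 < z) :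
    besselJ μ z = (z / 2) ^ μ * reducedBessel (μ + 1) (z ^ 2 / 4) := by
  have hz2 : 0 < z / 2 := half_pos hz
  refine HasSum.tsum_eq (((hasSum_reducedBessel (μ + 1) (z ^ 2 / 4)).mul_left _).congr_fun ?_)
  intro k
  have hpow : (z / 2) ^ (2 * (k : ℝ) + μ) = (z / 2) ^ μ * (z ^ 2 / 4) ^ k := by
    rw [rpow_add hz2, mul_comm, show z ^ 2 / 4 = (z / 2) ^ 2 by ring, ← pow_mul]
    exact_mod_cast rfl
  rw [hpow, neg_pow (z ^ 2 / 4), add_assoc (k : ℝ), add_comm (k : ℝ)]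
  ring

theorem IsFirstPosZero.reducedBessel {μ j : ℝ} (hj : IsFirstPosZero (besselJ μ) j) :
    IsFirstPosZero (reducedBessel (μ + 1)) (j ^ 2 / 4) := by
  obtain ⟨hj0, hjz, hne⟩ := hj
  refine ⟨by positivity, ?_, fun t ht htj h ↦ ?_⟩
  · rw [besselJ_eq_rpow_mul_reducedBessel μ hj0] at hjz
    exact (mul_eq_zero.1 hjz).resolve_left (by positivity)
  · have hz : 0 < 2 * √t := by positivity
    have hsq : (2 * √t) ^ 2 = 4 * t := by rw [mul_pow, sq_sqrt ht.le]; norm_num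
    refine hne (2 * √t) hz (lt_of_pow_lt_pow_left₀ 2 hj0.le (by linarith)) ?_
    rw [besselJ_eq_rpow_mul_reducedBessel μ hz, hsq, mul_div_cancel_left₀ t four_ne_zero, h,
      mul_zero]

/-- `y` solves `t y'' + a y' + q y = 0` on the real line, and `y'` is its derivative. For `q = 1`
this is Bessel's equation of order `a - 1` in the variable `t = z²/4`, divided by `t^((a-1)/2)`. -/
structure IsBesselSolution (a : ℝ) (q y y' : ℝ → ℝ) : Prop where
  hasDerivAt (t : ℝ) : HasDerivAt y (y' t) t
  exists_hasDerivAt_deriv (t : ℝ) :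
    ∃ y'', HasDerivAt y' y'' t ∧ t * y'' + a * y' t + q t * y t = 0

theorem isBesselSolution_reducedBessel (a : ℝ) :
    IsBesselSolution a 1 (reducedBessel a) (-reducedBessel (a + 1)) where
  hasDerivAt := hasDerivAt_reducedBessel a
  exists_hasDerivAt_deriv t := by
    refine ⟨reducedBessel (a + 2) t, ?_, ?_⟩
    · simpa [add_assoc, one_add_one_eq_two] using (hasDerivAt_reducedBessel (a + 1) t).neg
    · simp only [Pi.neg_apply, Pi.one_apply]
      linarith [reducedBessel_eq a t]

namespace IsBesselSolution

variable {a T R β : ℝ} {p q y y' w w' : ℝ → ℝ}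

protected theorem continuous (hy : IsBesselSolution a q y y') : Continuous y :=
  continuous_iff_continuousAt.2 fun t ↦ (hy.hasDerivAt t).continuousAt

theorem continuous_deriv (hy : IsBesselSolution a q y y') : Continuous y' :=
  continuous_iff_continuousAt.2 fun t ↦
    have ⟨_, h, _⟩ := hy.exists_hasDerivAt_deriv t
    h.continuousAt

theorem hasDerivAt_wronskian (hy : IsBesselSolution a p y y') (hw : IsBesselSolution a q w w')
    {t : ℝ} (ht : 0 < t) :
    HasDerivAt (fun x ↦ x ^ a * (y x * w' x - w x * y' x))
      (t ^ (a - 1) * ((p t - q t) * (y t * w t))) t := by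
  obtain ⟨y'', hy'', hyeq⟩ := hy.exists_hasDerivAt_deriv t
  obtain ⟨w'', hw'', hweq⟩ := hw.exists_hasDerivAt_deriv t
  refine ((hasDerivAt_rpow_const (.inl ht.ne')).mul
    (((hy.hasDerivAt t).mul hw'').sub ((hw.hasDerivAt t).mul hy''))).congr_deriv ?_
  have hta : t ^ a = t ^ (a - 1) * t := by rw [← rpow_add_one ht.ne', sub_add_cancel]
  simp only [Pi.mul_apply, Pi.sub_apply]
  rw [hta]
  linear_combination t ^ (a - 1) * (y t * hweq - w t * hyeq)

theorem exists_potential_eq (ha : 0 < a) (hy : IsBesselSolution a p y y')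
    (hw : IsBesselSolution a q w w') (hyT : IsFirstPosZero y T) (hwT : IsFirstPosZero w T) :
    ∃ c ∈ Ioo 0 T, p c = q c := by
  have hcont : Continuous fun x ↦ x ^ a * (y x * w' x - w x * y' x) :=
    (continuous_rpow_const ha.le).mul
      ((hy.continuous.mul hw.continuous_deriv).sub (hw.continuous.mul hy.continuous_deriv))
  obtain ⟨c, hc, hzero⟩ := exists_hasDerivAt_eq_zero hyT.1 hcont.continuousOn
    (by simp [zero_rpow ha.ne', hyT.2.1, hwT.2.1]) fun t ht ↦ hy.hasDerivAt_wronskian hw ht.1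
  have hyc : y c ≠ 0 := hyT.2.2 c hc.1 hc.2
  have hwc : w c ≠ 0 := hwT.2.2 c hc.1 hc.2
  have hpow : c ^ (a - 1) ≠ 0 := (rpow_pos_of_pos hc.1 _).ne'
  exact ⟨c, hc, sub_eq_zero.1 (by simpa [hyc, hwc, hpow] using hzero)⟩

theorem sub_mul_exp (a : ℝ) (hT : T ≠ 0) :
    IsBesselSolution a (fun t ↦ a / T + a ^ 2 / (2 * T) - a ^ 2 * t / (4 * T ^ 2))
      (fun t ↦ (T - t) * exp (-(a / (2 * T)) * t))
      (fun t ↦ -(1 + a / (2 * T) * (T - t)) * exp (-(a / (2 * T)) * t)) := by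
  set k := a / (2 * T) with hk
  have hexp (t : ℝ) : HasDerivAt (fun x ↦ exp (-k * x)) (exp (-k * t) * -k) t := by
    simpa using ((hasDerivAt_id t).const_mul (-k)).exp
  have hsub (t : ℝ) : HasDerivAt (fun x ↦ T - x) (-1) t := (hasDerivAt_id t).const_sub T
  refine ⟨fun t ↦ ?_, fun t ↦ ⟨(2 * k + k ^ 2 * (T - t)) * exp (-k * t), ?_, ?_⟩⟩
  · exact ((hsub t).mul (hexp t)).congr_deriv (by ring)
  · exact ((((hsub t).const_mul k).const_add 1).neg.mul (hexp t)).congr_deriv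
      (by simp only [Pi.neg_apply]; ring)
  · rw [hk]
    field_simp
    ring

theorem lt_of_isFirstPosZero (ha : 0 < a) (hy : IsBesselSolution a 1 y y')
    (hT : IsFirstPosZero y T) : a * (a + 4) / 4 < T := by
  have hT0 : 0 < T := hT.1
  have hw : IsFirstPosZero (fun t ↦ (T - t) * exp (-(a / (2 * T)) * t)) T :=
    ⟨hT0, by simp, fun t _ ht ↦ mul_ne_zero (sub_pos.2 ht).ne' (exp_pos _).ne'⟩
  obtain ⟨c, hc, hc_eq⟩ := hy.exists_potential_eq ha (sub_mul_exp a hT0.ne') hT hw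
  have hpotential : T = a + a ^ 2 / 2 - a ^ 2 / 4 * (c / T) := by
    simp only [Pi.one_apply] at hc_eq
    field_simp at hc_eq ⊢
    linarith
  have hcT : a ^ 2 / 4 * (c / T) < a ^ 2 / 4 * 1 := by
    gcongr
    exact (div_lt_one hT0).2 hc.2
  linarith

theorem hasDerivAt_jacobi (hy : IsBesselSolution a q y y') {φ φ' G : ℝ → ℝ} {t : ℝ} (ht : 0 < t)
    (hyt : y t ≠ 0) (hφ : HasDerivAt φ (φ' t) t)
    (hG : HasDerivAt G (t ^ a * φ' t ^ 2 - q t * t ^ (a - 1) * φ t ^ 2) t) :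
    HasDerivAt (fun x ↦ G x - x ^ a * φ x ^ 2 * (y' x / y x))
      (t ^ a * (φ' t - φ t * (y' t / y t)) ^ 2) t := by
  obtain ⟨y'', hy'', hyeq⟩ := hy.exists_hasDerivAt_deriv t
  refine (hG.sub (((hasDerivAt_rpow_const (.inl ht.ne')).mul (hφ.pow 2)).mul
    (hy''.div (hy.hasDerivAt t) hyt))).congr_deriv ?_
  have hta : t ^ a = t ^ (a - 1) * t := by rw [← rpow_add_one ht.ne', sub_add_cancel]
  simp only [Pi.mul_apply, Pi.pow_apply, Pi.div_apply]
  rw [hta]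
  field_simp
  linear_combination (-(φ t ^ 2 * y t)) * hyeq

theorem jacobi_energy_nonneg (hy : IsBesselSolution a q y y') (hR : 0 < R)
    (hne : ∀ t ∈ Icc 0 R, y t ≠ 0) {φ φ' G : ℝ → ℝ}
    (hφ : ∀ t ∈ Ioc 0 R, HasDerivAt φ (φ' t) t)
    (hG : ∀ t ∈ Ioc 0 R, HasDerivAt G (t ^ a * φ' t ^ 2 - q t * t ^ (a - 1) * φ t ^ 2) t)
    (hφ0 : Tendsto (fun t ↦ t ^ a * φ t ^ 2) (𝓝[>] 0) (𝓝 0)) (hG0 : Tendsto G (𝓝[>] 0) (𝓝 0))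
    (hφR : φ R = 0) : 0 ≤ G R := by
  set H : ℝ → ℝ := fun x ↦ G x - x ^ a * φ x ^ 2 * (y' x / y x) with hH
  have hderiv : ∀ t ∈ Ioc 0 R, HasDerivAt H (t ^ a * (φ' t - φ t * (y' t / y t)) ^ 2) t :=
    fun t ht ↦ hy.hasDerivAt_jacobi ht.1 (hne t (Ioc_subset_Icc_self ht)) (hφ t ht) (hG t ht)
  have hmono : MonotoneOn H (Ioc 0 R) := by
    refine monotoneOn_of_hasDerivWithinAt_nonneg (convex_Ioc 0 R)
      (fun t ht ↦ (hderiv t ht).continuousAt.continuousWithinAt)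
      (fun t ht ↦ (hderiv t (interior_subset ht)).hasDerivWithinAt) fun t ht ↦ ?_
    have ht0 : 0 < t := (interior_subset ht).1
    positivity
  have hlim : Tendsto H (𝓝[>] 0) (𝓝 0) := by
    have hlog : Tendsto (fun x ↦ y' x / y x) (𝓝[>] 0) (𝓝 (y' 0 / y 0)) :=
      ((hy.continuous_deriv.tendsto 0).div (hy.continuous.tendsto 0)
        (hne 0 (left_mem_Icc.2 hR.le))).mono_left nhdsWithin_le_nhds
    simpa using hG0.sub (hφ0.mul hlog)
  have hHR : H R = G R := by simp [hH, hφR]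
  rw [← hHR]
  refine le_of_tendsto hlim ?_
  filter_upwards [Ioc_mem_nhdsGT hR] with t ht
  exact hmono ht (right_mem_Ioc.2 hR) ht.2

end IsBesselSolution

/-- The energy `∫₀ᵗ (x^a φ'(x)² - x^(a-1) φ(x)²) dx` of the trial function `φ(x) = x^β - c`, in
closed form. -/
noncomputable def powerEnergy (a β c t : ℝ) : ℝ :=
  β ^ 2 * (t ^ (a + 2 * β - 1) / (a + 2 * β - 1)) -
    (t ^ (a + 2 * β) / (a + 2 * β) - 2 * c * (t ^ (a + β) / (a + β)) + c ^ 2 * (t ^ a / a))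

section PowerEnergy

variable {a β c t : ℝ}

theorem rpow_add_two_mul (ht : 0 < t) (a β : ℝ) : t ^ (a + 2 * β) = t ^ a * (t ^ β) ^ 2 := by
  rw [rpow_add ht, mul_comm 2 β, rpow_mul ht.le, rpow_two]

theorem hasDerivAt_powerEnergy (ha : 0 < a) (hβ : 0 < a + 2 * β - 1) (c : ℝ) (ht : 0 < t) :
    HasDerivAt (powerEnergy a β c)
      (t ^ a * (β * t ^ (β - 1)) ^ 2 - t ^ (a - 1) * (t ^ β - c) ^ 2) t := by
  have hpow {e : ℝ} (he : 0 < e) : HasDerivAt (fun x : ℝ ↦ x ^ e / e) (t ^ (e - 1)) t :=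
    ((hasDerivAt_rpow_const (.inl ht.ne')).div_const e).congr_deriv
      (mul_div_cancel_left₀ _ he.ne')
  refine (((hpow hβ).const_mul (β ^ 2)).sub (((hpow (by linarith : 0 < a + 2 * β)).sub
    ((hpow (by linarith : 0 < a + β)).const_mul (2 * c))).add
    ((hpow ha).const_mul (c ^ 2)))).congr_deriv ?_
  simp only [rpow_sub_one ht.ne', rpow_add_two_mul ht, rpow_add ht]
  field_simp
  ring

theorem tendsto_powerEnergy_zero (ha : 0 < a) (hβ : 0 < a + 2 * β - 1) (c : ℝ) :
    Tendsto (powerEnergy a β c) (𝓝[>] 0) (𝓝 0) := by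
  have h2β : 0 < a + 2 * β := by linarith
  have h1β : 0 < a + β := by linarith
  have hcont : Continuous (powerEnergy a β c) := by
    unfold powerEnergy
    fun_prop (disch := linarith)
  have hzero : powerEnergy a β c 0 = 0 := by
    simp [powerEnergy, zero_rpow, ha.ne', hβ.ne', h1β.ne', h2β.ne']
  exact (hcont.tendsto' 0 0 hzero).mono_left nhdsWithin_le_nhds

theorem tendsto_rpow_mul_rpow_sub_sq_zero (ha : 0 < a) (hβ : 0 < a + 2 * β) (c : ℝ) :
    Tendsto (fun t : ℝ ↦ t ^ a * (t ^ β - c) ^ 2) (𝓝[>] 0) (𝓝 0) := by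
  have hcont : Continuous fun t : ℝ ↦ (t ^ (a / 2 + β) - c * t ^ (a / 2)) ^ 2 := by
    fun_prop (disch := linarith)
  have hzero : ((0 : ℝ) ^ (a / 2 + β) - c * 0 ^ (a / 2)) ^ 2 = 0 := by
    rw [zero_rpow (by linarith), zero_rpow (by linarith)]
    ring
  refine ((hcont.tendsto' 0 0 hzero).mono_left nhdsWithin_le_nhds).congr' ?_
  filter_upwards [self_mem_nhdsWithin] with t (ht : 0 < t)
  have hta : t ^ a = (t ^ (a / 2)) ^ 2 := by
    simpa [mul_div_cancel₀] using rpow_add_two_mul ht 0 (a / 2)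
  rw [rpow_add ht, hta]
  ring

theorem powerEnergy_rpow_self (ha : 0 < a) (hβ : 0 < a + 2 * β - 1) (ht : 0 < t) :
    powerEnergy a β (t ^ β) t = β ^ 2 * (t ^ a * (t ^ β) ^ 2 / t) *
      ((a + 2 * β - 1)⁻¹ - 2 * t / (a * (a + β) * (a + 2 * β))) := by
  have h2β : a + 2 * β ≠ 0 := by linarith
  have h1β : a + β ≠ 0 := by linarith
  have hfrac : 1 / (a + 2 * β) - 2 / (a + β) + 1 / a =
      2 * β ^ 2 / (a * (a + β) * (a + 2 * β)) := by
    field_simp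
    ring
  have hcancel : t ^ a * (t ^ β) ^ 2 / t * t = t ^ a * (t ^ β) ^ 2 := div_mul_cancel₀ _ ht.ne'
  simp only [powerEnergy, rpow_sub_one ht.ne', rpow_add_two_mul ht, rpow_add ht]
  linear_combination (-(t ^ a * (t ^ β) ^ 2)) * hfrac +
    2 * β ^ 2 / (a * (a + β) * (a + 2 * β)) * hcancel

end PowerEnergy

namespace IsBesselSolution

variable {a T R β : ℝ} {y y' : ℝ → ℝ}

theorem two_mul_mul_le_of_ne_zero (ha : 0 < a) (hy : IsBesselSolution a 1 y y') (hR : 0 < R)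
    (hne : ∀ t ∈ Icc 0 R, y t ≠ 0) (hβ0 : β ≠ 0) (hβ : 0 < a + 2 * β - 1) :
    2 * (a + 2 * β - 1) * R ≤ a * (a + β) * (a + 2 * β) := by
  have h2β : 0 < a + 2 * β := by linarith
  have h1β : 0 < a + β := by linarith
  have henergy : 0 ≤ powerEnergy a β (R ^ β) R :=
    hy.jacobi_energy_nonneg hR hne
      (fun t ht ↦ (hasDerivAt_rpow_const (.inl ht.1.ne')).sub_const (R ^ β))
      (fun t ht ↦ by simpa using hasDerivAt_powerEnergy ha hβ (R ^ β) ht.1)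
      (tendsto_rpow_mul_rpow_sub_sq_zero ha h2β _) (tendsto_powerEnergy_zero ha hβ _) (sub_self _)
  rw [powerEnergy_rpow_self ha hβ hR] at henergy
  have hfactor := nonneg_of_mul_nonneg_right henergy (by positivity)
  rw [sub_nonneg, inv_eq_one_div, div_le_div_iff₀ (by positivity) hβ] at hfactor
  linarith

theorem two_mul_mul_le (ha : 0 < a) (hy : IsBesselSolution a 1 y y') (hT : 0 < T)
    (hne : ∀ t ∈ Ico 0 T, y t ≠ 0) (hβ : 0 < a + 2 * β - 1) :
    2 * (a + 2 * β - 1) * T ≤ a * (a + β) * (a + 2 * β) := by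
  set s : Set (ℝ × ℝ) := ({β | 0 < a + 2 * β - 1} ∩ {0}ᶜ) ×ˢ Ioo 0 T with hs
  have hmem : (β, T) ∈ closure s := by
    rw [hs, closure_prod_eq, closure_Ioo hT.ne]
    exact ⟨(dense_compl_singleton 0).open_subset_closure_inter
      (isOpen_lt (by fun_prop) (by fun_prop)) hβ, right_mem_Icc.2 hT.le⟩
  refine ContinuousWithinAt.closure_le (f := fun x : ℝ × ℝ ↦ 2 * (a + 2 * x.1 - 1) * x.2)
    (g := fun x : ℝ × ℝ ↦ a * (a + x.1) * (a + 2 * x.1)) hmem (by fun_prop) (by fun_prop) ?_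
  rintro ⟨β', R⟩ ⟨⟨hβ', hβ'0⟩, hR⟩
  exact hy.two_mul_mul_le_of_ne_zero ha hR.1
    (fun t ht ↦ hne t ⟨ht.1, ht.2.trans_lt hR.2⟩) hβ'0 hβ'

theorem le_of_forall_ne_zero (ha : 0 < a) (hy : IsBesselSolution a 1 y y') (hT : 0 < T)
    (hne : ∀ t ∈ Ico 0 T, y t ≠ 0) : 4 * T ≤ a * (√(a + 1) + 1) ^ 2 := by
  set s := √(a + 1)
  have hs0 : 0 < s := sqrt_pos.2 (by linarith)
  have hsq : s ^ 2 = a + 1 := sq_sqrt (by linarith)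
  -- `2T ≤ a (a + β) (a + 2β) / (a + 2β - 1)` is sharpest for `a + 2β - 1 = √(a + 1)`.
  have h := hy.two_mul_mul_le (β := (s + 1 - a) / 2) ha hT hne (by linarith)
  refine le_of_mul_le_mul_left ?_ hs0
  calc s * (4 * T) = 2 * (2 * (a + 2 * ((s + 1 - a) / 2) - 1) * T) := by ring
    _ ≤ 2 * (a * (a + (s + 1 - a) / 2) * (a + 2 * ((s + 1 - a) / 2))) := by gcongr
    _ = s * (a * (s + 1) ^ 2) := by linear_combination (-(a * (s + 1))) * hsq

end IsBesselSolution

theorem first_bessel_zero_bounds (μ j : ℝ) (hμ : -1 < μ)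
    (hj : IsFirstPosZero (besselJ μ) j) :
    Real.sqrt ((μ + 1) * (μ + 5)) ≤ j ∧ j ≤ Real.sqrt (μ + 1) * (Real.sqrt (μ + 2) + 1) := by
  have ha : 0 < μ + 1 := by linarith
  have hj0 : 0 < j := hj.1
  have hT := hj.reducedBessel
  have hy := isBesselSolution_reducedBessel (μ + 1)
  constructor
  · refine sqrt_le_iff.2 ⟨hj0.le, ?_⟩
    linarith [hy.lt_of_isFirstPosZero ha hT]
  · have hne : ∀ t ∈ Ico 0 (j ^ 2 / 4), reducedBessel (μ + 1) t ≠ 0 := by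
      rintro t ⟨ht0, htj⟩
      rcases ht0.eq_or_lt with rfl | ht0
      · simpa [reducedBessel_zero] using (Gamma_pos_of_pos ha).ne'
      · exact hT.2.2 t ht0 htj
    have hupper := hy.le_of_forall_ne_zero ha hT.1 hne
    rw [show μ + 1 + 1 = μ + 2 by ring] at hupper
    refine le_of_sq_le_sq ?_ (by positivity)
    rw [mul_pow, sq_sqrt ha.le]
    linarith
end

section
/- The best constant of the fractional Hardy inequality C_{N,α} = 2^α Γ²((N+α)/4) / Γ²((N-α)/4) satisfies C_{N,α} ∼ (N/2)^α as N → ∞, for each fixed 0 < α < 2; consequently j_{(N-2)/2,1}^α ∼ C_{N,α} as N → ∞. -/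
open Real Filter

/-- Best constant of the fractional Hardy inequality. -/
noncomputable def fracHardyConst (N : ℕ) (α : ℝ) : ℝ :=
  2 ^ α * Real.Gamma (((N : ℝ) + α) / 4) ^ 2 / Real.Gamma (((N : ℝ) - α) / 4) ^ 2

/-!
The constant is a ratio of Gamma values, and `Γ(x + a) ∼ x ^ a Γ(x)` by log-convexity for
`0 ≤ a ≤ 1`, hence for every real `a` by `Γ(x + 1) = x Γ(x)`.

For the Bessel zero, `u(z) = √z J_μ(z)` solves `u'' = -(1 - (μ² - 1/4) / z²) u` and is positive
up to `j_{μ,1}`. Vanishing at both `0` and `j_{μ,1}`, it cannot be convex in between, so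
`j_{μ,1}² > μ² - 1/4`. For `r > 1` the coefficient is at least `c² = 1 - r⁻² > 0` beyond `r μ`, so
by Sturm comparison with `sin (c (z - r μ))` the positivity of `u` lasts at most `π / c` longer.
Therefore `j_{μ,1} ∼ μ`.
-/

open Set Asymptotics Topology

section GammaRatio

variable {x a : ℝ}

theorem Gamma_add_le_rpow_mul_Gamma (hx : 0 < x) (ha₀ : 0 ≤ a) (ha₁ : a ≤ 1) :
    Gamma (x + a) ≤ x ^ a * Gamma x := by
  rcases ha₀.eq_or_lt with rfl | ha₀
  · simp
  rcases ha₁.eq_or_lt with rfl | ha₁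
  · rw [Gamma_add_one hx.ne', rpow_one]
  have hΓ : 0 < Gamma x := Gamma_pos_of_pos hx
  calc Gamma (x + a) = Gamma ((1 - a) * x + a * (x + 1)) := by ring_nf
    _ ≤ Gamma x ^ (1 - a) * Gamma (x + 1) ^ a :=
      Gamma_mul_add_mul_le_rpow_Gamma_mul_rpow_Gamma hx (by linarith) (by linarith) ha₀ (by ring)
    _ = x ^ a * (Gamma x ^ (1 - a) * Gamma x ^ a) := by
      rw [Gamma_add_one hx.ne', mul_rpow hx.le hΓ.le]
      ring
    _ = x ^ a * Gamma x := by rw [← rpow_add hΓ, sub_add_cancel, rpow_one]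

theorem mul_Gamma_le_rpow_mul_Gamma_add (hx : 0 < x) (ha₀ : 0 ≤ a) (ha₁ : a ≤ 1) :
    x * Gamma x ≤ (x + a) ^ (1 - a) * Gamma (x + a) := by
  have h := Gamma_add_le_rpow_mul_Gamma (x := x + a) (a := 1 - a) (by linarith) (by linarith)
    (by linarith)
  rwa [add_add_sub_cancel, Gamma_add_one hx.ne'] at h

theorem add_const_isEquivalent_atTop (a : ℝ) : (fun x : ℝ => x + a) ~[atTop] fun x => x :=
  IsEquivalent.refl.add_const_of_norm_tendsto_atTop tendsto_norm_atTop_atTop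

theorem Gamma_add_isEquivalent_of_mem_Icc (ha : a ∈ Icc 0 1) :
    (fun x => Gamma (x + a)) ~[atTop] fun x => x ^ a * Gamma x := by
  have hlower : Tendsto (fun x => (x / (x + a)) ^ (1 - a)) atTop (𝓝 1) := by
    have h : Tendsto (fun x => x / (x + a)) atTop (𝓝 1) :=
      (isEquivalent_iff_tendsto_one ((eventually_gt_atTop (-a)).mono fun x hx => by linarith)).1
        (add_const_isEquivalent_atTop a).symm
    simpa using h.rpow_const (p := 1 - a) (.inl one_ne_zero)
  refine isEquivalent_of_tendsto_one
    (tendsto_of_tendsto_of_tendsto_of_le_of_le' hlower tendsto_const_nhds ?_ ?_)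
  · filter_upwards [eventually_gt_atTop 0] with x hx
    have hxa : 0 < x + a := add_pos_of_pos_of_nonneg hx ha.1
    have := Gamma_pos_of_pos hx
    rw [Pi.div_apply, div_rpow hx.le hxa.le, div_le_div_iff₀ (by positivity) (by positivity)]
    calc x ^ (1 - a) * (x ^ a * Gamma x) = x * Gamma x := by
          rw [← mul_assoc, ← rpow_add hx, sub_add_cancel, rpow_one]
      _ ≤ (x + a) ^ (1 - a) * Gamma (x + a) := mul_Gamma_le_rpow_mul_Gamma_add hx ha.1 ha.2
      _ = Gamma (x + a) * (x + a) ^ (1 - a) := mul_comm _ _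
  · filter_upwards [eventually_gt_atTop 0] with x hx
    have := Gamma_pos_of_pos hx
    rw [Pi.div_apply, div_le_one (by positivity)]
    exact Gamma_add_le_rpow_mul_Gamma hx ha.1 ha.2

theorem periodic_Gamma_add_isEquivalent :
    Function.Periodic
      (fun a : ℝ => (fun x => Gamma (x + a)) ~[atTop] fun x => x ^ a * Gamma x) 1 := by
  intro a
  have hleft : (fun x => Gamma (x + (a + 1))) =ᶠ[atTop] fun x => (x + a) * Gamma (x + a) := by
    filter_upwards [eventually_gt_atTop (-a)] with x hx
    rw [← add_assoc, Gamma_add_one (by linarith)]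
  have hright : (fun x => x ^ (a + 1) * Gamma x) =ᶠ[atTop] fun x => x * (x ^ a * Gamma x) := by
    filter_upwards [eventually_gt_atTop 0] with x hx
    rw [rpow_add_one hx.ne']
    ring
  have hadd := add_const_isEquivalent_atTop a
  refine propext ⟨fun h => ?_, fun h => ?_⟩
  · have hdiv := ((h.congr_left hleft).congr_right hright).div hadd
    refine (hdiv.congr_left ?_).congr_right ?_
    · filter_upwards [eventually_gt_atTop (-a)] with x hx
      exact mul_div_cancel_left₀ _ (by linarith)
    · filter_upwards [eventually_ne_atTop 0] with x hx
      exact mul_div_cancel_left₀ _ hx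
  · exact ((hadd.mul h).congr_left hleft.symm).congr_right hright.symm

theorem Gamma_add_isEquivalent (a : ℝ) :
    (fun x => Gamma (x + a)) ~[atTop] fun x => x ^ a * Gamma x := by
  obtain ⟨b, hb, hab⟩ := periodic_Gamma_add_isEquivalent.exists_mem_Ico₀ one_pos a
  exact hab.mpr (Gamma_add_isEquivalent_of_mem_Icc (Ico_subset_Icc_self hb))

theorem fracHardyConst_isEquivalent (α : ℝ) :
    (fun N : ℕ => fracHardyConst N α) ~[atTop] fun N => ((N : ℝ) / 2) ^ α := by
  have hquarter : Tendsto (fun N : ℕ => (N : ℝ) / 4) atTop atTop :=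
    tendsto_natCast_atTop_atTop.atTop_div_const (by norm_num)
  have hratio := (((Gamma_add_isEquivalent (α / 4)).div
    (Gamma_add_isEquivalent (-(α / 4)))).pow 2).comp_tendsto hquarter
  refine ((IsEquivalent.refl (u := fun _ : ℕ => (2 : ℝ) ^ α)).mul hratio).congr_left ?_
    |>.congr_right ?_
  · refine .of_forall fun N => ?_
    simp [fracHardyConst, add_div, neg_div, sub_eq_add_neg, div_pow, mul_div_assoc]
  · filter_upwards [eventually_gt_atTop 0] with N hN
    have hx : 0 < (N : ℝ) / 4 := by positivity
    have hΓ : Gamma ((N : ℝ) / 4) ≠ 0 := (Gamma_pos_of_pos hx).ne'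
    have hexp : (N : ℝ) / 2 = 2 * (N / 4) := by ring
    simp only [Pi.mul_apply, Function.comp_apply, Pi.pow_apply, Pi.div_apply]
    rw [mul_div_mul_right _ _ hΓ, ← rpow_sub hx, ← rpow_mul_natCast hx.le, hexp,
      mul_rpow zero_le_two hx.le]
    congr 2
    push_cast
    ring

end GammaRatio

section BesselClifford

/-- The `k`-th Taylor coefficient of the Bessel–Clifford function of order `μ`. At a pole of `Γ` the
junk values make it `0`, which is the correct value of `1 / Γ` there. -/
noncomputable def besselCliffordCoeff (μ : ℝ) (k : ℕ) : ℝ :=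
  (k.factorial * Gamma (k + μ + 1))⁻¹

/-- The Bessel–Clifford function `C_μ`, the entire function with
`J_μ(z) = (z / 2) ^ μ * C_μ(-z² / 4)`. -/
noncomputable def besselClifford (μ t : ℝ) : ℝ :=
  ∑' k : ℕ, besselCliffordCoeff μ k * t ^ k

theorem besselCliffordCoeff_eq_mul (μ : ℝ) (k : ℕ) :
    besselCliffordCoeff μ k = (k + μ + 1) * besselCliffordCoeff (μ + 1) k := by
  unfold besselCliffordCoeff
  rw [← add_assoc (k : ℝ) μ 1]
  rcases eq_or_ne ((k : ℝ) + μ + 1) 0 with h | h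
  · simp [h]
  · rw [Gamma_add_one h]
    field_simp

theorem succ_mul_besselCliffordCoeff_succ (μ : ℝ) (k : ℕ) :
    (k + 1) * besselCliffordCoeff μ (k + 1) = besselCliffordCoeff (μ + 1) k := by
  unfold besselCliffordCoeff
  rw [Nat.factorial_succ, show ((k + 1 : ℕ) : ℝ) + μ + 1 = k + (μ + 1) + 1 by push_cast; ring]
  push_cast
  field_simp

theorem summable_abs_besselCliffordCoeff_mul_pow (μ r : ℝ) :
    Summable fun k : ℕ => |besselCliffordCoeff μ k| * r ^ k := by
  refine .of_norm_bounded_eventually_nat (summable_pow_div_factorial |r|) ?_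
  filter_upwards [tendsto_natCast_atTop_atTop.eventually_ge_atTop (1 - μ)] with k hk
  have hΓ : 1 ≤ Gamma (k + μ + 1) := by
    have h2 : (2 : ℝ) ≤ k + μ + 1 := by linarith
    simpa only [Gamma_two] using Gamma_strictMonoOn_Ici.monotoneOn self_mem_Ici h2 h2
  have hcoeff : |besselCliffordCoeff μ k| ≤ (k.factorial : ℝ)⁻¹ := by
    rw [besselCliffordCoeff, abs_of_nonneg (by positivity)]
    gcongr
    exact le_mul_of_one_le_right (by positivity) hΓ
  rw [norm_mul, norm_pow, norm_eq_abs, norm_eq_abs, abs_abs, div_eq_inv_mul]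
  gcongr

theorem hasSum_besselClifford (μ t : ℝ) :
    HasSum (fun k : ℕ => besselCliffordCoeff μ k * t ^ k) (besselClifford μ t) := by
  refine Summable.hasSum (.of_norm ?_)
  simpa only [norm_mul, norm_pow, norm_eq_abs] using
    summable_abs_besselCliffordCoeff_mul_pow μ |t|

theorem besselClifford_zero (μ : ℝ) : besselClifford μ 0 = (Gamma (μ + 1))⁻¹ := by
  rw [besselClifford, tsum_eq_single 0 fun k hk => by simp [hk]]
  simp [besselCliffordCoeff]

theorem hasDerivAt_besselClifford (μ t : ℝ) :
    HasDerivAt (besselClifford μ) (besselClifford (μ + 1) t) t := by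
  have htail : besselClifford μ = fun s =>
      besselCliffordCoeff μ 0 + ∑' k : ℕ, besselCliffordCoeff μ (k + 1) * s ^ (k + 1) := by
    funext s
    rw [besselClifford, (hasSum_besselClifford μ s).summable.tsum_eq_zero_add, pow_zero, mul_one]
  have hball : t ∈ Metric.ball (0 : ℝ) (|t| + 1) := by simp
  rw [htail]
  refine (hasDerivAt_tsum_of_isPreconnected
    (g' := fun k s => besselCliffordCoeff (μ + 1) k * s ^ k)
    (summable_abs_besselCliffordCoeff_mul_pow (μ + 1) (|t| + 1)) Metric.isOpen_ball
    (convex_ball _ _).isPreconnected ?_ ?_ hball ?_ hball).const_add _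
  · intro k s _
    refine ((hasDerivAt_pow (k + 1) s).const_mul (besselCliffordCoeff μ (k + 1))).congr_deriv ?_
    rw [← succ_mul_besselCliffordCoeff_succ, add_tsub_cancel_right]
    push_cast
    ring
  · intro k s hs
    rw [mem_ball_zero_iff, norm_eq_abs] at hs
    rw [norm_mul, norm_pow, norm_eq_abs, norm_eq_abs]
    gcongr
  · exact (summable_nat_add_iff 1).2 (hasSum_besselClifford μ t).summable

theorem besselClifford_eq_add (μ t : ℝ) :
    besselClifford μ t = (μ + 1) * besselClifford (μ + 1) t + t * besselClifford (μ + 2) t := by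
  have hshift : HasSum (fun k : ℕ => (k : ℝ) * besselCliffordCoeff (μ + 1) k * t ^ k)
      (t * besselClifford (μ + 2) t) := by
    rw [← hasSum_nat_add_iff' 1]
    convert! (hasSum_besselClifford (μ + 2) t).mul_left t using 1
    · funext k
      rw [show μ + 2 = μ + 1 + 1 by ring, ← succ_mul_besselCliffordCoeff_succ (μ + 1) k]
      push_cast
      ring
    · simp
  refine (hasSum_besselClifford μ t).unique ?_
  convert! ((hasSum_besselClifford (μ + 1) t).mul_left (μ + 1)).add hshift using 2 with k
  rw [besselCliffordCoeff_eq_mul]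
  ring

end BesselClifford

section BesselJ

variable {μ z : ℝ}

theorem besselJ_eq_rpow_mul_besselClifford (μ : ℝ) (hz : 0 < z) :
    besselJ μ z = (z / 2) ^ μ * besselClifford μ (-z ^ 2 / 4) := by
  rw [besselJ, besselClifford, ← tsum_mul_left]
  refine tsum_congr fun k => ?_
  have hpow : (z / 2) ^ (2 * (k : ℝ) + μ) = (z / 2) ^ μ * (z ^ 2 / 4) ^ k := by
    rw [add_comm, rpow_add (by positivity), rpow_mul (by positivity), rpow_natCast, rpow_two]
    ring
  rw [hpow, besselCliffordCoeff, neg_div, neg_pow (z ^ 2 / 4)]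
  ring

theorem besselJ_add_besselJ_add_two (μ : ℝ) (hz : 0 < z) :
    besselJ μ z + besselJ (μ + 2) z = 2 * (μ + 1) / z * besselJ (μ + 1) z := by
  have hz2 : 0 < z / 2 := by positivity
  simp only [besselJ_eq_rpow_mul_besselClifford _ hz]
  rw [besselClifford_eq_add μ, rpow_add hz2, rpow_add hz2, rpow_one, rpow_two]
  field_simp
  ring

theorem hasDerivAt_besselClifford_neg_sq_div (μ z : ℝ) :
    HasDerivAt (fun z => besselClifford μ (-z ^ 2 / 4))
      (besselClifford (μ + 1) (-z ^ 2 / 4) * (-(z / 2))) z := by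
  refine (hasDerivAt_besselClifford μ _).comp z
    (((hasDerivAt_pow 2 z).neg.div_const 4).congr_deriv ?_)
  ring

theorem hasDerivAt_besselJ (μ : ℝ) (hz : 0 < z) :
    HasDerivAt (besselJ μ) (μ / z * besselJ μ z - besselJ (μ + 1) z) z := by
  have hz2 : z / 2 ≠ 0 := by positivity
  have hpow : HasDerivAt (fun z : ℝ => (z / 2) ^ μ) (μ / z * (z / 2) ^ μ) z := by
    refine (((hasDerivAt_id z).div_const 2).rpow_const (.inl hz2)).congr_deriv ?_
    rw [id, rpow_sub_one hz2]
    field_simp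
  refine ((hpow.mul (hasDerivAt_besselClifford_neg_sq_div μ z)).congr_of_eventuallyEq
    ?_).congr_deriv ?_
  · filter_upwards [eventually_gt_nhds hz] with w hw
    exact besselJ_eq_rpow_mul_besselClifford μ hw
  · rw [besselJ_eq_rpow_mul_besselClifford μ hz, besselJ_eq_rpow_mul_besselClifford _ hz,
      rpow_add_one hz2]
    ring

theorem hasDerivAt_besselJ_add_one (μ : ℝ) (hz : 0 < z) :
    HasDerivAt (besselJ (μ + 1)) (besselJ μ z - (μ + 1) / z * besselJ (μ + 1) z) z := by
  refine (hasDerivAt_besselJ (μ + 1) hz).congr_deriv ?_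
  rw [show μ + 1 + 1 = μ + 2 by ring]
  linear_combination -besselJ_add_besselJ_add_two μ hz

/-- The Liouville normal form `√z J_μ(z)` of the Bessel function: it satisfies an equation without
first-order term, to which Sturm comparison applies. -/
noncomputable def sqrtMulBesselJ (μ z : ℝ) : ℝ := √z * besselJ μ z

/-- The derivative of `sqrtMulBesselJ μ` on the positive half-line. -/
noncomputable def sqrtMulBesselJDeriv (μ z : ℝ) : ℝ :=
  √z * ((μ + 1 / 2) / z * besselJ μ z - besselJ (μ + 1) z)

theorem hasDerivAt_sqrt_eq_div (hz : 0 < z) : HasDerivAt (fun z => √z) (√z / (2 * z)) z := by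
  refine (hasDerivAt_sqrt hz.ne').congr_deriv ?_
  rw [div_eq_div_iff (by positivity) (by positivity)]
  linear_combination -2 * mul_self_sqrt hz.le

theorem hasDerivAt_sqrtMulBesselJ (μ : ℝ) (hz : 0 < z) :
    HasDerivAt (sqrtMulBesselJ μ) (sqrtMulBesselJDeriv μ z) z := by
  refine ((hasDerivAt_sqrt_eq_div hz).mul (hasDerivAt_besselJ μ hz)).congr_deriv ?_
  rw [sqrtMulBesselJDeriv]
  field_simp
  ring

theorem hasDerivAt_sqrtMulBesselJDeriv (μ : ℝ) (hz : 0 < z) :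
    HasDerivAt (sqrtMulBesselJDeriv μ)
      (-((1 - (μ ^ 2 - 1 / 4) / z ^ 2) * sqrtMulBesselJ μ z)) z := by
  have hinv : HasDerivAt (fun z => (μ + 1 / 2) / z) (-((μ + 1 / 2) / z ^ 2)) z := by
    refine ((hasDerivAt_inv hz.ne').const_mul (μ + 1 / 2)).congr_deriv ?_
    ring
  refine ((hasDerivAt_sqrt_eq_div hz).mul ((hinv.mul (hasDerivAt_besselJ μ hz)).sub
    (hasDerivAt_besselJ_add_one μ hz))).congr_deriv ?_
  simp only [sqrtMulBesselJ, Pi.sub_apply, Pi.mul_apply]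
  field_simp
  ring

theorem continuousOn_sqrtMulBesselJ (hμ : 0 ≤ μ) : ContinuousOn (sqrtMulBesselJ μ) (Ici 0) := by
  have hcont : Continuous fun z => √z * ((z / 2) ^ μ * besselClifford μ (-z ^ 2 / 4)) := by
    refine continuous_sqrt.mul (.mul ?_ ?_)
    · exact (continuous_rpow_const hμ).comp (continuous_id.div_const 2)
    · exact continuous_iff_continuousAt.2 fun z =>
        (hasDerivAt_besselClifford_neg_sq_div μ z).continuousAt
  refine hcont.continuousOn.congr fun z hz => ?_
  rcases (mem_Ici.1 hz).eq_or_lt with rfl | hz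
  · simp [sqrtMulBesselJ]
  · rw [sqrtMulBesselJ, besselJ_eq_rpow_mul_besselClifford μ hz]

end BesselJ

section Sturm

variable {u u' Q : ℝ → ℝ} {a b c : ℝ}

theorem exists_coeff_pos_of_consecutive_zeros (hab : a < b) (hcont : ContinuousOn u (Icc a b))
    (hu : ∀ z ∈ Ioo a b, HasDerivAt u (u' z) z)
    (hu' : ∀ z ∈ Ioo a b, HasDerivAt u' (-(Q z * u z)) z)
    (hpos : ∀ z ∈ Ioo a b, 0 < u z) (ha : u a = 0) (hb : u b = 0) :
    ∃ z ∈ Ioo a b, 0 < Q z := by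
  by_contra! hQ
  have hconvex : ConvexOn ℝ (Icc a b) u := by
    refine convexOn_of_hasDerivWithinAt2_nonneg (f' := u') (f'' := fun z => -(Q z * u z))
      (convex_Icc a b) hcont ?_ ?_ ?_ <;> rw [interior_Icc]
    · exact fun z hz => (hu z hz).hasDerivWithinAt
    · exact fun z hz => (hu' z hz).hasDerivWithinAt
    · exact fun z hz => neg_nonneg.2 (mul_nonpos_of_nonpos_of_nonneg (hQ z hz) (hpos z hz).le)
  obtain ⟨z, hz⟩ := exists_between hab
  have hle : u z ≤ max (u a) (u b) :=
    hconvex.le_max_of_mem_Icc (left_mem_Icc.2 hab.le) (right_mem_Icc.2 hab.le) ⟨hz.1.le, hz.2.le⟩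
  rw [ha, hb, max_self] at hle
  exact (hpos z hz).not_ge hle

-- The Wronskian of `u` and `sin (c (z - a))` would be antitone, yet it equals `-c u(a)` at the left
-- end and `c u(a + π / c)` at the right end.
theorem exists_nonpos_of_sq_le_coeff (hc : 0 < c)
    (hu : ∀ z ∈ Icc a (a + π / c), HasDerivAt u (u' z) z)
    (hu' : ∀ z ∈ Icc a (a + π / c), HasDerivAt u' (-(Q z * u z)) z)
    (hQ : ∀ z ∈ Ioo a (a + π / c), c ^ 2 ≤ Q z) :
    ∃ z ∈ Icc a (a + π / c), u z ≤ 0 := by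
  by_contra! hpos
  let W : ℝ → ℝ := fun z => u' z * sin (c * (z - a)) - u z * (cos (c * (z - a)) * c)
  have hphase (z : ℝ) : HasDerivAt (fun z => c * (z - a)) c z := by
    simpa using ((hasDerivAt_id z).sub_const a).const_mul c
  have hW : ∀ z ∈ Icc a (a + π / c),
      HasDerivAt W ((c ^ 2 - Q z) * (u z * sin (c * (z - a)))) z := by
    intro z hz
    refine (((hu' z hz).mul (hphase z).sin).sub
      ((hu z hz).mul ((hphase z).cos.mul_const c))).congr_deriv ?_
    ring
  have hab : a ≤ a + π / c := le_add_of_nonneg_right (by positivity)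
  have hanti : AntitoneOn W (Icc a (a + π / c)) := by
    refine antitoneOn_of_hasDerivWithinAt_nonpos (convex_Icc _ _)
      (fun z hz => (hW z hz).continuousAt.continuousWithinAt)
      (fun z hz => (hW z (interior_subset hz)).hasDerivWithinAt) fun z hz => ?_
    have hsin : 0 ≤ sin (c * (z - a)) := by
      obtain ⟨haz, hzb⟩ := interior_subset hz
      refine sin_nonneg_of_nonneg_of_le_pi (mul_nonneg hc.le (sub_nonneg.2 haz)) ?_
      rw [mul_comm, ← le_div_iff₀ hc]
      linarith
    have hu_pos := hpos z (interior_subset hz)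
    rw [interior_Icc] at hz
    exact mul_nonpos_of_nonpos_of_nonneg (sub_nonpos.2 (hQ z hz)) (by positivity)
  have hWab : W (a + π / c) ≤ W a := hanti (left_mem_Icc.2 hab) (right_mem_Icc.2 hab) hab
  have hleft : W a = -(u a * c) := by simp [W]
  have hright : W (a + π / c) = u (a + π / c) * c := by simp [W, mul_div_cancel₀ π hc.ne']
  have ha := mul_pos (hpos a (left_mem_Icc.2 hab)) hc
  have hb := mul_pos (hpos _ (right_mem_Icc.2 hab)) hc
  linarith

end Sturm

namespace IsFirstPosZero

variable {μ j z : ℝ}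

theorem besselJ_pos (hμ : -1 < μ) (hj : IsFirstPosZero (besselJ μ) j) (hz : 0 < z) (hzj : z < j) :
    0 < besselJ μ z := by
  rw [besselJ_eq_rpow_mul_besselClifford μ hz]
  refine mul_pos (by positivity) ?_
  by_contra! hneg
  have hzero : 0 < besselClifford μ (-0 ^ 2 / 4) := by
    simpa [besselClifford_zero] using Gamma_pos_of_pos (by linarith : 0 < μ + 1)
  have hcont : ContinuousOn (fun w => besselClifford μ (-w ^ 2 / 4)) (Icc 0 z) :=
    fun w _ => (hasDerivAt_besselClifford_neg_sq_div μ w).continuousAt.continuousWithinAt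
  obtain ⟨w, ⟨hw0, hwz⟩, hw⟩ := intermediate_value_Icc' hz.le hcont ⟨hneg, hzero.le⟩
  have hw_pos : 0 < w := hw0.lt_of_ne fun h => hzero.ne' (h ▸ hw)
  refine hj.2.2 w hw_pos (hwz.trans_lt hzj) ?_
  rw [besselJ_eq_rpow_mul_besselClifford μ hw_pos]
  exact mul_eq_zero_of_right _ hw

theorem sqrtMulBesselJ_pos (hμ : -1 < μ) (hj : IsFirstPosZero (besselJ μ) j) (hz : 0 < z)
    (hzj : z < j) : 0 < sqrtMulBesselJ μ z :=
  mul_pos (sqrt_pos.2 hz) (hj.besselJ_pos hμ hz hzj)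

theorem order_sq_sub_lt_sq (hμ : 0 ≤ μ) (hj : IsFirstPosZero (besselJ μ) j) :
    μ ^ 2 - 1 / 4 < j ^ 2 := by
  obtain ⟨z, ⟨hz, hzj⟩, hQ⟩ := exists_coeff_pos_of_consecutive_zeros hj.1
    ((continuousOn_sqrtMulBesselJ hμ).mono Icc_subset_Ici_self)
    (fun z hz => hasDerivAt_sqrtMulBesselJ μ hz.1)
    (fun z hz => hasDerivAt_sqrtMulBesselJDeriv μ hz.1)
    (fun z hz => hj.sqrtMulBesselJ_pos (by linarith) hz.1 hz.2)
    (by simp [sqrtMulBesselJ]) (by simp [sqrtMulBesselJ, hj.2.1])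
  rw [sub_pos, div_lt_one (by positivity)] at hQ
  exact hQ.trans (by gcongr)

theorem order_sub_half_lt (hμ : 0 ≤ μ) (hj : IsFirstPosZero (besselJ μ) j) : μ - 1 / 2 < j := by
  nlinarith [hj.order_sq_sub_lt_sq hμ, hj.1]

theorem le_add_pi_div {a c : ℝ} (hμ : -1 < μ) (hj : IsFirstPosZero (besselJ μ) j) (ha : 0 < a)
    (hc : 0 < c) (hac : μ ^ 2 / a ^ 2 ≤ 1 - c ^ 2) : j ≤ a + π / c := by
  by_contra! hlt
  have hQ : ∀ z ∈ Ioo a (a + π / c), c ^ 2 ≤ 1 - (μ ^ 2 - 1 / 4) / z ^ 2 := by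
    intro z hz
    have hz_le : (μ ^ 2 - 1 / 4) / z ^ 2 ≤ μ ^ 2 / a ^ 2 := by
      have := hz.1.le
      gcongr
      linarith
    linarith
  obtain ⟨z, hz, hz_nonpos⟩ := exists_nonpos_of_sq_le_coeff hc
    (fun z hz => hasDerivAt_sqrtMulBesselJ μ (ha.trans_le hz.1))
    (fun z hz => hasDerivAt_sqrtMulBesselJDeriv μ (ha.trans_le hz.1)) hQ
  exact hz_nonpos.not_gt
    (hj.sqrtMulBesselJ_pos hμ (ha.trans_le hz.1) (hz.2.trans_lt hlt))

theorem exists_forall_le_mul_order_add {r : ℝ} (hr : 1 < r) :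
    ∃ K : ℝ, ∀ μ j : ℝ, 0 < μ → IsFirstPosZero (besselJ μ) j → j ≤ r * μ + K := by
  have hr_inv : (r ^ 2)⁻¹ < 1 := inv_lt_one_of_one_lt₀ (one_lt_pow₀ hr two_ne_zero)
  refine ⟨π / √(1 - (r ^ 2)⁻¹), fun μ j hμ hj => hj.le_add_pi_div (by linarith) (by positivity)
    (sqrt_pos.2 (sub_pos.2 hr_inv)) (le_of_eq ?_)⟩
  rw [sq_sqrt (sub_nonneg.2 hr_inv.le)]
  field_simp
  ring

end IsFirstPosZero

theorem isEquivalent_of_isFirstPosZero_besselJ {ι : Type*} {l : Filter ι} {μ j : ι → ℝ}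
    (hμ : Tendsto μ l atTop) (hj : ∀ᶠ i in l, IsFirstPosZero (besselJ (μ i)) (j i)) :
    j ~[l] μ := by
  have hμ_pos : ∀ᶠ i in l, 0 < μ i := hμ.eventually_gt_atTop 0
  refine isEquivalent_of_tendsto_one (tendsto_order.2 ⟨fun b hb => ?_, fun b hb => ?_⟩)
  · have hlim : Tendsto (fun i => 1 - 1 / 2 / μ i) l (𝓝 (1 - 0)) :=
      tendsto_const_nhds.sub (hμ.const_div_atTop _)
    rw [sub_zero] at hlim
    filter_upwards [hlim.eventually_const_lt hb, hμ_pos, hj] with i hi hμi hji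
    refine hi.trans ?_
    rw [Pi.div_apply, lt_div_iff₀ hμi, sub_mul, one_mul, div_mul_cancel₀ _ hμi.ne']
    exact hji.order_sub_half_lt hμi.le
  · obtain ⟨r, hr, hrb⟩ := exists_between hb
    obtain ⟨K, hK⟩ := IsFirstPosZero.exists_forall_le_mul_order_add hr
    have hlim : Tendsto (fun i => r + K / μ i) l (𝓝 (r + 0)) :=
      tendsto_const_nhds.add (hμ.const_div_atTop _)
    rw [add_zero] at hlim
    filter_upwards [hlim.eventually_lt_const hrb, hμ_pos, hj] with i hi hμi hji
    refine lt_of_le_of_lt ?_ hi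
    rw [Pi.div_apply, div_le_iff₀ hμi, add_mul, div_mul_cancel₀ _ hμi.ne']
    exact hK _ _ hμi hji

theorem isEquivalent_half_of_isFirstPosZero_besselJ {j : ℕ → ℝ}
    (hj : ∀ᶠ N : ℕ in atTop, IsFirstPosZero (besselJ (((N : ℝ) - 2) / 2)) (j N)) :
    j ~[atTop] fun N => (N : ℝ) / 2 := by
  have hhalf : Tendsto (fun N : ℕ => (N : ℝ) / 2) atTop atTop :=
    tendsto_natCast_atTop_atTop.atTop_div_const two_pos
  have horder : (fun N : ℕ => ((N : ℝ) - 2) / 2) ~[atTop] fun N => (N : ℝ) / 2 := by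
    refine ((add_const_isEquivalent_atTop (-1)).comp_tendsto hhalf).congr_left
      (.of_forall fun N => ?_)
    simp only [Function.comp_apply]
    ring
  exact (isEquivalent_of_isFirstPosZero_besselJ (horder.symm.tendsto_atTop hhalf) hj).trans horder

theorem fracHardyConst_asymp_general (α : ℝ) (j : ℕ → ℝ)
    (hj : ∀ᶠ N : ℕ in atTop, IsFirstPosZero (besselJ (((N : ℝ) - 2) / 2)) (j N)) :
    Tendsto (fun N : ℕ => ((N : ℝ) / 2) ^ α / fracHardyConst N α) atTop (𝓝 1) ∧
    Tendsto (fun N : ℕ => fracHardyConst N α / j N ^ α) atTop (𝓝 1) := by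
  have hC := fracHardyConst_isEquivalent α
  have hjα : (fun N => j N ^ α) ~[atTop] fun N : ℕ => ((N : ℝ) / 2) ^ α :=
    (isEquivalent_half_of_isFirstPosZero_besselJ hj).rpow fun N => by positivity
  have hpow_pos : ∀ᶠ N : ℕ in atTop, 0 < ((N : ℝ) / 2) ^ α := by
    filter_upwards [eventually_gt_atTop 0] with N hN
    positivity
  exact ⟨(isEquivalent_iff_tendsto_one ((hC.eventually_pos hpow_pos).mono fun _ h => h.ne')).1
      hC.symm,
    (isEquivalent_iff_tendsto_one ((hjα.eventually_pos hpow_pos).mono fun _ h => h.ne')).1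
      (hC.trans hjα.symm)⟩

/-- `C_{N,α} ∼ (N/2)^α` and `j_{(N-2)/2,1}^α ∼ C_{N,α}` as `N → ∞`
(where `a_N ∼ b_N` means `b_N / a_N → 1`). -/
theorem fracHardyConst_asymp (α : ℝ) (hα : 0 < α) (hα2 : α < 2) (j : ℕ → ℝ)
    (hj : ∀ N : ℕ, 1 ≤ N → IsFirstPosZero (besselJ (((N : ℝ) - 2) / 2)) (j N)) :
    Tendsto (fun N : ℕ => ((N : ℝ) / 2) ^ α / fracHardyConst N α) atTop (nhds 1) ∧
    Tendsto (fun N : ℕ => fracHardyConst N α / j N ^ α) atTop (nhds 1) :=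
  fracHardyConst_asymp_general α j (eventually_atTop.2 ⟨1, hj⟩)
end
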